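/- For all integers g ≥ 1 and d ≥ 2, d^{g−1} / (2^{g−1} (g−1)!) ≤ H_g^d / H_1^d ≤ S(d + 2g − 3, d − 1), where H_1^d = d! · p(d) and S(m, n) is the Stirling number of the second kind, i.e. the number of partitions of an m-element set into exactly n nonempty blocks. -/

import Mathlib

noncomputable section

/-- The content of the cell in row `i` and column `j` (0-indexed) is `j - i`. -/
def content (c : ℕ × ℕ) : ℤ := (c.2 : ℤ) - (c.1 : ℤ)

open scoped Classical in
/-- The complete homogeneous symmetric polynomial `h_r(x₁, …, x_d)` as a function of
`x : Fin d → ℝ`: the sum of `x_{i₁} ⋯ x_{i_r}` over all `1 ≤ i₁ ≤ … ≤ i_r ≤ d`,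
i.e. over all monotone maps `Fin r → Fin d`. -/
def hsym (d r : ℕ) (x : Fin d → ℝ) : ℝ :=
  ∑ f ∈ Finset.univ.filter (fun f : Fin r → Fin d => Monotone f), ∏ i, x (f i)

/-- `h_r(λ)`: the evaluation of the complete homogeneous symmetric polynomial of degree `r`
at the multiset of contents of the Young diagram `λ` (independent of the enumeration of
the cells, `h_r` being symmetric). -/
def hYoung (r : ℕ) (lam : YoungDiagram) : ℝ :=
  hsym lam.cells.card r (fun i => (content (lam.cells.equivFin.symm i) : ℝ))

/-- `H_g^d = d! · Σ_{λ ∈ Y^d} h_{2g−2}(λ)`, the sum running over all Young diagrams with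
exactly `d` cells. -/
def Hgd (g d : ℕ) : ℝ :=
  (Nat.factorial d) * ∑' lam : {lam : YoungDiagram // lam.card = d}, hYoung (2 * g - 2) lam.1

/-- `S(m, n)`, the Stirling number of the second kind: the number of partitions of an
`m`-element set into exactly `n` nonempty blocks. -/
def stirling2 (m n : ℕ) : ℕ :=
  Nat.card {P : Finpartition (Finset.univ : Finset (Fin m)) // P.parts.card = n}

/-!
Upper bound: removing maximal cells one at a time shows that the contents of a diagram with `n + 1`
cells are dominated in absolute value by `0, 1, …, n`, and `h_r(0, 1, …, n)` satisfies the
recurrence of the Stirling numbers `S(n + r, n)`. Hence the bound holds for every single diagram.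

Lower bound: Hunter's inequality `(∑ a ∈ s, a ^ 2) ^ k / (2 ^ k k!) ≤ h_{2k}(s)` follows by
induction on `k` from a Lagrange multiplier argument on a sphere. With Jensen's inequality it
reduces the claim to showing that the content squares sum to at least `d` on average. In a
single diagram only the cells of content `0` fall short of `1`; moving them up two rows, all but
two of them are compensated by cells of content `2`. A deficit remains for at most one diagram
with `d` cells, which lies in a `2 × 2` square, and the one-row diagram makes up for it. This
needs `d ≥ 3`; for `d = 2`, `h_{2k} = 1` on both diagrams.
-/

section CompleteHomog

variable {R : Type*}

/-- The complete homogeneous symmetric function `h_r` of a multiset `s`, encoded as the coefficient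
of `T ^ r` in `∏ a ∈ s, 1 / (1 - a T)` so that its symmetry is built in. -/
def completeHomog [CommSemiring R] (s : Multiset R) (r : ℕ) : R :=
  PowerSeries.coeff r (s.map fun a ↦ PowerSeries.mk fun n ↦ a ^ n).prod

section CommSemiring

variable [CommSemiring R]

lemma mk_pow_eq_one_add (a : R) :
    PowerSeries.mk (fun n ↦ a ^ n) =
      1 + PowerSeries.C a * (PowerSeries.X * PowerSeries.mk fun n ↦ a ^ n) := by
  ext n
  cases n with
  | zero => simp
  | succ n => simp [PowerSeries.coeff_one, PowerSeries.coeff_succ_X_mul, pow_succ']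

@[simp]
lemma completeHomog_zero_right (s : Multiset R) : completeHomog s 0 = 1 := by
  rw [completeHomog, PowerSeries.coeff_zero_eq_constantCoeff_apply, map_multiset_prod,
    Multiset.map_map]
  simp [← PowerSeries.coeff_zero_eq_constantCoeff_apply]

@[simp]
lemma completeHomog_zero_succ (r : ℕ) : completeHomog (0 : Multiset R) (r + 1) = 0 := by
  simp [completeHomog, PowerSeries.coeff_one]

lemma completeHomog_cons_succ (a : R) (s : Multiset R) (r : ℕ) :
    completeHomog (a ::ₘ s) (r + 1) = completeHomog s (r + 1) + a * completeHomog (a ::ₘ s) r := by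
  simp only [completeHomog, Multiset.map_cons, Multiset.prod_cons]
  conv_lhs => rw [mk_pow_eq_one_add]
  rw [add_mul, one_mul, mul_assoc, mul_assoc, map_add, PowerSeries.coeff_C_mul,
    PowerSeries.coeff_succ_X_mul]

lemma completeHomog_zero_cons (s : Multiset R) (r : ℕ) :
    completeHomog (0 ::ₘ s) r = completeHomog s r := by
  cases r <;> simp [completeHomog_cons_succ]

lemma completeHomog_singleton (a : R) (r : ℕ) : completeHomog {a} r = a ^ r := by
  simp [completeHomog]

lemma map_completeHomog {S : Type*} [CommSemiring S] (f : R →+* S) (s : Multiset R) (r : ℕ) :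
    f (completeHomog s r) = completeHomog (s.map f) r := by
  induction s using Multiset.induction_on generalizing r with
  | empty => cases r <;> simp
  | cons a s ih =>
    induction r with
    | zero => simp
    | succ r ihr =>
      rw [Multiset.map_cons, completeHomog_cons_succ, completeHomog_cons_succ, map_add, map_mul,
        ih, ihr, Multiset.map_cons]

lemma completeHomog_map_mul (c : R) (s : Multiset R) (r : ℕ) :
    completeHomog (s.map (c * ·)) r = c ^ r * completeHomog s r := by
  induction s using Multiset.induction_on generalizing r with
  | empty => cases r <;> simp
  | cons a s ih =>
    induction r with
    | zero => simp
    | succ r ihr =>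
      rw [Multiset.map_cons] at ihr ⊢
      rw [completeHomog_cons_succ, completeHomog_cons_succ, ih, ihr]
      ring

end CommSemiring

lemma succ_mul_completeHomog_succ [CommRing R] (s : Multiset R) (r : ℕ) :
    (r + 1) * completeHomog s (r + 1) = (s.map fun a ↦ a * completeHomog (a ::ₘ s) r).sum := by
  induction s using Multiset.induction_on generalizing r with
  | empty => simp
  | cons b s ih =>
    induction r with
    | zero =>
      have degree_one : completeHomog s 1 = s.sum := by simpa using ih 0
      simp [completeHomog_cons_succ, degree_one, add_comm]
    | succ r ihr =>
      have expand : (s.map fun a ↦ a * completeHomog (a ::ₘ b ::ₘ s) (r + 1)).sum =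
          (s.map fun a ↦ a * completeHomog (a ::ₘ s) (r + 1)).sum +
            b * (s.map fun a ↦ a * completeHomog (a ::ₘ b ::ₘ s) r).sum := by
        rw [← Multiset.sum_map_mul_left, ← Multiset.sum_map_add]
        refine congrArg _ (Multiset.map_congr rfl fun a _ ↦ ?_)
        rw [Multiset.cons_swap a b s, completeHomog_cons_succ]
        ring
      rw [Multiset.map_cons, Multiset.sum_cons] at ihr
      rw [Multiset.map_cons, Multiset.sum_cons, expand, ← ih, completeHomog_cons_succ b s,
        completeHomog_cons_succ b (b ::ₘ s)]
      push_cast at ihr ⊢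
      linear_combination b * ihr

section LinearOrder

variable [CommRing R] [LinearOrder R] [IsStrictOrderedRing R]

lemma abs_completeHomog_le_of_rel {s t : Multiset R} (h : Multiset.Rel (fun a b ↦ |a| ≤ b) s t)
    (r : ℕ) : |completeHomog s r| ≤ completeHomog t r := by
  induction h generalizing r with
  | zero => cases r <;> simp
  | @cons a b s t hab _ ih =>
    induction r with
    | zero => simp
    | succ r ihr =>
      rw [completeHomog_cons_succ, completeHomog_cons_succ]
      refine (abs_add_le _ _).trans (add_le_add (ih _) ?_)
      rw [abs_mul]
      exact mul_le_mul hab ihr (abs_nonneg _) ((abs_nonneg _).trans hab)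

lemma completeHomog_nonneg {s : Multiset R} (hs : ∀ a ∈ s, 0 ≤ a) (r : ℕ) :
    0 ≤ completeHomog s r :=
  (abs_nonneg _).trans <| abs_completeHomog_le_of_rel
    (Multiset.rel_refl_of_refl_on fun a ha ↦ (abs_of_nonneg (hs a ha)).le) r

lemma exists_mem_ne_zero_mul_completeHomog_nonneg {s : Multiset R} (hs : ∃ a ∈ s, a ≠ 0) {r : ℕ}
    (hr : Odd r) : ∃ a ∈ s, a ≠ 0 ∧ 0 ≤ a * completeHomog s r := by
  by_contra! hneg
  set h := completeHomog s r with h_def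
  have hscaled : 0 ≤ completeHomog (s.map (-h * ·)) r := by
    refine completeHomog_nonneg (fun b hb ↦ ?_) r
    obtain ⟨a, ha, rfl⟩ := Multiset.mem_map.1 hb
    rcases eq_or_ne a 0 with rfl | ha0
    · simp
    · linarith [hneg a ha ha0]
  rw [completeHomog_map_mul, hr.neg_pow, ← h_def, neg_mul, ← pow_succ, neg_nonneg] at hscaled
  have h_zero : h = 0 := eq_zero_of_pow_eq_zero (hscaled.antisymm (hr.add_one.pow_nonneg h))
  obtain ⟨a, ha, ha0⟩ := hs
  simpa [h_zero] using hneg a ha ha0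

end LinearOrder

lemma hasStrictFDerivAt_completeHomog {𝕜 E ι : Type*} [NontriviallyNormedField 𝕜]
    [NormedAddCommGroup E] [NormedSpace 𝕜 E] {f : ι → E → 𝕜} {f' : ι → E →L[𝕜] 𝕜} {x : E}
    {s : Finset ι} (hf : ∀ i ∈ s, HasStrictFDerivAt (f i) (f' i) x) (r : ℕ) :
    HasStrictFDerivAt (fun y ↦ completeHomog (s.val.map (f · y)) (r + 1))
      (∑ i ∈ s, completeHomog (f i x ::ₘ s.val.map (f · x)) r • f' i) x := by
  induction s using Finset.cons_induction generalizing r with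
  | empty => simpa using hasStrictFDerivAt_const 0 x
  | cons j s hj ih =>
    have hfj := hf j (Finset.mem_cons_self j s)
    replace ih := ih fun i hi ↦ hf i (Finset.mem_cons_of_mem hi)
    simp only [Finset.cons_val, Multiset.map_cons, Finset.sum_cons]
    induction r with
    | zero =>
      simpa only [completeHomog_cons_succ, completeHomog_zero_right, zero_add, mul_one, one_smul,
        add_comm (f' j)] using (ih 0).fun_add hfj
    | succ r ihr =>
      simp only [completeHomog_cons_succ (f j _) (s.val.map _) (r + 1)]
      refine ((ih (r + 1)).add (hfj.mul ihr)).congr_fderiv ?_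
      ext v
      simp only [completeHomog_cons_succ (f j x) (_ ::ₘ _),
        Multiset.cons_swap _ (f j x) (s.val.map _), add_mul, mul_assoc, Finset.sum_add_distrib,
        Finset.mul_sum, add_apply, sum_apply, smul_apply, smul_eq_mul, smul_add]
      ring

end CompleteHomog

section SumSq

/-- The power sum `∑ a ∈ s, a ^ 2`; for the family of coordinates of a vector it is the squared
Euclidean norm. -/
def sumSq {R : Type*} [CommSemiring R] (s : Multiset R) : R := (s.map (· ^ 2)).sum

lemma map_sumSq {R S : Type*} [CommSemiring R] [CommSemiring S] (f : R →+* S) (s : Multiset R) :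
    f (sumSq s) = sumSq (s.map f) := by
  simp [sumSq, map_multiset_sum, Multiset.map_map]

lemma sumSq_cons {R : Type*} [CommSemiring R] (a : R) (s : Multiset R) :
    sumSq (a ::ₘ s) = a ^ 2 + sumSq s := by
  simp [sumSq]

section LinearOrder

variable {R : Type*} [CommRing R] [LinearOrder R] [IsStrictOrderedRing R]

lemma sumSq_nonneg (s : Multiset R) : 0 ≤ sumSq s :=
  Multiset.sum_nonneg <| by simpa using fun a _ ↦ sq_nonneg a

lemma sumSq_eq_zero_iff {s : Multiset R} : sumSq s = 0 ↔ ∀ a ∈ s, a = 0 := by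
  induction s using Multiset.induction_on with
  | empty => simp [sumSq]
  | cons a s ih =>
    simp [sumSq_cons, add_eq_zero_iff_of_nonneg (sq_nonneg a) (sumSq_nonneg s), ih]

end LinearOrder

section Coords

variable {ι : Type*} [Fintype ι]

/-- The coordinates of a vector, as a multiset. -/
def coords (x : EuclideanSpace ℝ ι) : Multiset ℝ := Finset.univ.val.map x

lemma exists_coords_eq (s : Multiset ℝ) : ∃ n, ∃ x : EuclideanSpace ℝ (Fin n), coords x = s := by
  induction s using Quotient.inductionOn with
  | h l =>
    refine ⟨l.length, WithLp.toLp 2 l.get, ?_⟩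
    rw [coords, Fin.univ_val_map, List.ofFn_get]
    rfl

lemma sumSq_coords (x : EuclideanSpace ℝ ι) : sumSq (coords x) = ‖x‖ ^ 2 := by
  rw [EuclideanSpace.real_norm_sq_eq, sumSq, coords, Multiset.map_map]
  rfl

lemma hasStrictFDerivAt_completeHomog_coords (x : EuclideanSpace ℝ ι) (r : ℕ) :
    HasStrictFDerivAt (fun y ↦ completeHomog (coords y) (r + 1))
      (∑ i, completeHomog (x i ::ₘ coords x) r • EuclideanSpace.proj (𝕜 := ℝ) i) x :=
  hasStrictFDerivAt_completeHomog
    (fun i _ ↦ (EuclideanSpace.proj (𝕜 := ℝ) (i : ι)).hasStrictFDerivAt) r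

lemma exists_isMinOn_completeHomog_coords (x : EuclideanSpace ℝ ι) (r : ℕ) :
    ∃ y : EuclideanSpace ℝ ι, ‖y‖ = ‖x‖ ∧
      IsMinOn (fun z ↦ completeHomog (coords z) (r + 1)) {z | ‖z‖ = ‖x‖} y := by
  have hcont : Continuous fun z : EuclideanSpace ℝ ι ↦ completeHomog (coords z) (r + 1) :=
    continuous_iff_continuousAt.2 fun z ↦
      (hasStrictFDerivAt_completeHomog_coords z r).continuousAt
  have hcompact : IsCompact {z : EuclideanSpace ℝ ι | ‖z‖ = ‖x‖} := by
    simpa only [Metric.sphere, dist_zero_right] using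
      isCompact_sphere (0 : EuclideanSpace ℝ ι) ‖x‖
  exact hcompact.exists_isMinOn ⟨x, rfl⟩ hcont.continuousOn

lemma exists_multiplier_of_isMinOn_completeHomog_coords {x : EuclideanSpace ℝ ι} (hx : x ≠ 0)
    {r : ℕ} (hmin : IsMinOn (fun z ↦ completeHomog (coords z) (r + 1)) {z | ‖z‖ = ‖x‖} x) :
    ∃ μ : ℝ, ∀ a ∈ coords x, completeHomog (a ::ₘ coords x) r = μ * a := by
  classical
  have hextr : IsLocalExtrOn (fun z ↦ completeHomog (coords z) (r + 1))
      {z | ‖z‖ ^ 2 = ‖x‖ ^ 2} x := by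
    simp only [sq_eq_sq₀ (norm_nonneg _) (norm_nonneg _)]
    exact hmin.localize.isExtr
  obtain ⟨a, b, hab, hsum⟩ := hextr.exists_multipliers_of_hasStrictFDerivAt_1d
    (hasStrictFDerivAt_norm_sq x) (hasStrictFDerivAt_completeHomog_coords x r)
  have hcoord (i : ι) : a * (2 * x i) + b * completeHomog (x i ::ₘ coords x) r = 0 := by
    simpa [EuclideanSpace.inner_single_right] using
      congrArg (fun L ↦ L (EuclideanSpace.single i 1)) hsum
  have hb : b ≠ 0 := by
    rintro rfl
    have ha : a ≠ 0 := by simpa using hab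
    exact hx <| PiLp.ext fun i ↦ by simpa [ha] using hcoord i
  refine ⟨-2 * a / b, fun c hc ↦ ?_⟩
  obtain ⟨i, -, rfl⟩ := Multiset.mem_map.1 hc
  field_simp
  linarith [hcoord i]

end Coords

/-- Euler's identity turns the multiplier equations into `(2k + 2) h_{2k+2}(s) = μ ∑ a²`, while the
equation at a nonzero `a` with `0 ≤ a h_{2k+1}(s)` bounds `μ` below by `h_{2k}(a ::ₘ s)`. -/
lemma sumSq_pow_div_le_of_multiplier {k : ℕ} {s : Multiset ℝ} (hs : sumSq s ≠ 0)
    (ih : ∀ t : Multiset ℝ, sumSq t ^ k / (2 ^ k * k.factorial) ≤ completeHomog t (2 * k)) {μ : ℝ}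
    (hμ : ∀ a ∈ s, completeHomog (a ::ₘ s) (2 * k + 1) = μ * a) :
    sumSq s ^ (k + 1) / (2 ^ (k + 1) * (k + 1).factorial) ≤ completeHomog s (2 * (k + 1)) := by
  obtain ⟨a, ha, ha0, hmul⟩ := exists_mem_ne_zero_mul_completeHomog_nonneg
    (by simpa [sumSq_eq_zero_iff] using hs) (odd_two_mul_add_one k)
  have multiplier_eq : μ * a ^ 2 =
      a * completeHomog s (2 * k + 1) + a ^ 2 * completeHomog (a ::ₘ s) (2 * k) := by
    linear_combination -a * hμ a ha + a * completeHomog_cons_succ a s (2 * k)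
  have le_multiplier : sumSq s ^ k / (2 ^ k * k.factorial) ≤ μ := by
    have hcons : sumSq s ≤ sumSq (a ::ₘ s) := by
      rw [sumSq_cons]
      exact le_add_of_nonneg_left (sq_nonneg a)
    calc sumSq s ^ k / (2 ^ k * k.factorial)
        ≤ sumSq (a ::ₘ s) ^ k / (2 ^ k * k.factorial) := by
          have := sumSq_nonneg s
          gcongr
      _ ≤ completeHomog (a ::ₘ s) (2 * k) := ih _
      _ ≤ μ := le_of_mul_le_mul_left (a := a ^ 2) (by linarith) (by positivity)
  have euler : (2 * k + 2) * completeHomog s (2 * (k + 1)) = μ * sumSq s := by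
    rw [sumSq, ← Multiset.sum_map_mul_left]
    convert succ_mul_completeHomog_succ s (2 * k + 1) using 1
    · rw [mul_add_one 2 k]
      push_cast
      ring
    · exact congrArg _ <| Multiset.map_congr rfl fun a ha ↦ by rw [hμ a ha]; ring
  calc sumSq s ^ (k + 1) / (2 ^ (k + 1) * (k + 1).factorial)
      = sumSq s ^ k / (2 ^ k * k.factorial) * sumSq s / (2 * k + 2) := by
        rw [Nat.factorial_succ]
        push_cast
        field_simp
        ring
    _ ≤ μ * sumSq s / (2 * k + 2) := by
        have := sumSq_nonneg s
        gcongr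
    _ = completeHomog s (2 * (k + 1)) := by
        rw [← euler]
        field_simp

/-- Hunter's inequality. -/
theorem sumSq_pow_div_le_completeHomog (k : ℕ) (s : Multiset ℝ) :
    sumSq s ^ k / (2 ^ k * k.factorial) ≤ completeHomog s (2 * k) := by
  induction k generalizing s with
  | zero => simp
  | succ k ih =>
    by_cases hs : sumSq s = 0
    · simpa [hs] using
        completeHomog_nonneg (fun a ha ↦ (sumSq_eq_zero_iff.1 hs a ha).ge) (2 * (k + 1))
    obtain ⟨n, x, rfl⟩ := exists_coords_eq s
    obtain ⟨y, hyx, hmin⟩ := exists_isMinOn_completeHomog_coords x (2 * k + 1)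
    have hsq : sumSq (coords x) = sumSq (coords y) := by rw [sumSq_coords, sumSq_coords, hyx]
    rw [hsq] at hs ⊢
    obtain ⟨μ, hμ⟩ := exists_multiplier_of_isMinOn_completeHomog_coords
      (by simpa [sumSq_coords] using hs) (hyx.symm ▸ hmin)
    exact (sumSq_pow_div_le_of_multiplier hs ih hμ).trans (hmin rfl)

end SumSq

section Hsym

lemma monotone_finCons_zero_iff {d r : ℕ} {f : Fin r → Fin (d + 1)} :
    Monotone (Fin.cons 0 f : Fin (r + 1) → Fin (d + 1)) ↔ Monotone f := by
  refine ⟨fun hf i j hij ↦ ?_, fun hf i j hij ↦ ?_⟩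
  · simpa using hf (Fin.succ_le_succ_iff.2 hij)
  · cases i using Fin.cases with
    | zero => simp
    | succ i =>
      cases j using Fin.cases with
      | zero => exact absurd hij (by simp)
      | succ j => simpa using hf (Fin.succ_le_succ_iff.1 hij)

@[simp]
lemma hsym_zero_right (d : ℕ) (x : Fin d → ℝ) : hsym d 0 x = 1 := by
  simp [hsym, Subsingleton.monotone, Finset.filter_true_of_mem]

@[simp]
lemma hsym_zero_succ (r : ℕ) (x : Fin 0 → ℝ) : hsym 0 (r + 1) x = 0 := by
  simp [hsym]

open scoped Classical in
lemma sum_prod_monotone_eq_zero {d r : ℕ} (x : Fin (d + 1) → ℝ) :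
    ∑ f : Fin (r + 1) → Fin (d + 1) with Monotone f ∧ f 0 = 0, ∏ i, x (f i) =
      x 0 * hsym (d + 1) r x := by
  rw [hsym, Finset.mul_sum]
  refine (Finset.sum_nbij (Fin.cons 0) (fun f hf ↦ ?_) (Fin.cons_right_injective _).injOn
    (fun f hf ↦ ?_) fun f _ ↦ ?_).symm
  · simpa [monotone_finCons_zero_iff] using hf
  · obtain ⟨-, hmono, hzero⟩ := Finset.mem_filter.1 hf
    have hcons : (Fin.cons 0 (Fin.tail f) : Fin (r + 1) → Fin (d + 1)) = f := by
      rw [← hzero, Fin.cons_self_tail]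
    exact ⟨Fin.tail f, by simpa using monotone_finCons_zero_iff.1 (hcons ▸ hmono), hcons⟩
  · simp [Fin.prod_univ_succ]

open scoped Classical in
lemma sum_prod_monotone_ne_zero {d r : ℕ} (x : Fin (d + 1) → ℝ) :
    ∑ f : Fin (r + 1) → Fin (d + 1) with Monotone f ∧ f 0 ≠ 0, ∏ i, x (f i) =
      hsym d (r + 1) (x ∘ Fin.succ) := by
  rw [hsym]
  refine (Finset.sum_nbij (Fin.succ ∘ ·) (fun f hf ↦ ?_) (Fin.succ_injective d).comp_left.injOn
    (fun f hf ↦ ?_) fun f _ ↦ rfl).symm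
  · simpa [Fin.succ_ne_zero] using Fin.strictMono_succ.monotone.comp (Finset.mem_filter.1 hf).2
  · obtain ⟨-, hmono, hzero⟩ := Finset.mem_filter.1 hf
    choose g hg using fun i ↦
      Fin.exists_succ_eq.2 ((Fin.pos_of_ne_zero hzero).trans_le (hmono (Fin.zero_le i))).ne'
    obtain rfl : Fin.succ ∘ g = f := funext hg
    have hg_mono : Monotone g := fun i j hij ↦ Fin.succ_le_succ_iff.1 (hmono hij)
    exact ⟨g, by simpa using hg_mono, rfl⟩

lemma hsym_succ_succ {d r : ℕ} (x : Fin (d + 1) → ℝ) :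
    hsym (d + 1) (r + 1) x = hsym d (r + 1) (x ∘ Fin.succ) + x 0 * hsym (d + 1) r x := by
  classical
  rw [← sum_prod_monotone_eq_zero, ← sum_prod_monotone_ne_zero, hsym,
    add_comm (Finset.sum _ _), ← Finset.sum_filter_add_sum_filter_not _ (fun f ↦ f 0 = 0),
    Finset.filter_filter, Finset.filter_filter]

lemma hsym_eq_completeHomog {d : ℕ} (x : Fin d → ℝ) (r : ℕ) :
    hsym d r x = completeHomog (Finset.univ.val.map x) r := by
  induction d generalizing r with
  | zero => cases r <;> simp
  | succ d ih =>
    have hmap : Finset.univ.val.map x = x 0 ::ₘ Finset.univ.val.map (x ∘ Fin.succ) := by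
      simp [Fin.univ_val_map, List.ofFn_succ]
    induction r with
    | zero => simp
    | succ r ihr => rw [hsym_succ_succ, ih, ihr, hmap, completeHomog_cons_succ]

end Hsym

section Contents

/-- The multiset of contents of a set of cells. -/
def contents (s : Finset (ℕ × ℕ)) : Multiset ℤ := s.val.map content

lemma hYoung_eq_completeHomog (r : ℕ) (lam : YoungDiagram) :
    hYoung r lam = (completeHomog (contents lam.cells) r : ℤ) := by
  rw [hYoung, hsym_eq_completeHomog, ← eq_intCast (Int.castRingHom ℝ), map_completeHomog]
  have hcells : Finset.univ.val.map (fun i ↦ (lam.cells.equivFin.symm i : ℕ × ℕ)) =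
      lam.cells.val := by
    rw [← Multiset.attach_map_val lam.cells.val, ← Finset.attach_val, ← Finset.univ_eq_attach,
      ← Multiset.map_univ_val_equiv lam.cells.equivFin.symm, Multiset.map_map]
    rfl
  rw [contents, Multiset.map_map, ← hcells, Multiset.map_map]
  rfl

end Contents

section StirlingSecond

open Finset

lemma completeHomog_range_eq_stirlingSecond (n r : ℕ) :
    completeHomog (Multiset.range (n + 1)) r = Nat.stirlingSecond (n + r) n := by
  induction n generalizing r with
  | zero => cases r <;> simp [completeHomog_singleton]
  | succ n ih =>
    induction r with
    | zero => simp [Nat.stirlingSecond_self]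
    | succ r ihr =>
      rw [Multiset.range_succ, completeHomog_cons_succ, ← Multiset.range_succ, ih, ihr,
        ← add_assoc (n + 1) r 1, Nat.stirlingSecond_succ_succ, add_right_comm n 1 r, ← add_assoc]
      ring

variable {α : Type*} [DecidableEq α] {t : Finset α} {a : α}

lemma subset_of_mem_insert_empty_parts {P : Finpartition t} {p : Finset α}
    (hp : p ∈ insert ∅ P.parts) : p ⊆ t := by
  rcases mem_insert.1 hp with rfl | hp
  exacts [empty_subset t, P.le hp]

lemma disjoint_of_mem_insert_empty_parts {P : Finpartition t} {p q : Finset α}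
    (hp : p ∈ insert ∅ P.parts) (hq : q ∈ P.parts.erase p) : Disjoint q p := by
  rcases mem_insert.1 hp with rfl | hp
  exacts [disjoint_empty_right q, P.disjoint (mem_of_mem_erase hq) hp (ne_of_mem_erase hq)]

lemma parts_avoid_eq_erase {P : Finpartition t} {p : Finset α} (hp : p ∈ insert ∅ P.parts) :
    (P.avoid p).parts = P.parts.erase p := by
  ext q
  rw [Finpartition.mem_avoid]
  constructor
  · rintro ⟨d, hd, hdp, rfl⟩
    have hd_erase : d ∈ P.parts.erase p := mem_erase.2 ⟨fun h ↦ hdp h.le, hd⟩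
    rwa [sdiff_eq_self_of_disjoint (disjoint_of_mem_insert_empty_parts hp hd_erase)]
  · intro hq
    have hdisj := disjoint_of_mem_insert_empty_parts hp hq
    refine ⟨q, mem_of_mem_erase hq, fun hqp ↦ ?_, sdiff_eq_self_of_disjoint hdisj⟩
    exact P.ne_bot (mem_of_mem_erase hq) (hdisj.eq_bot_of_le hqp)

lemma erase_empty_insert_erase_parts {P : Finpartition t} {p : Finset α}
    (hp : p ∈ insert ∅ P.parts) : (insert p (P.parts.erase p)).erase ∅ = P.parts := by
  rcases mem_insert.1 hp with rfl | hp
  · rw [erase_insert_eq_erase, erase_idem, erase_eq_of_notMem P.empty_notMem_parts]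
  · rw [insert_erase hp, erase_eq_of_notMem P.empty_notMem_parts]

lemma exists_erase_parts_eq {u : Finset α} (hu : u ⊆ t) (P : Finpartition u) :
    ∃ P' : Finpartition t, t \ u ∈ insert ∅ P'.parts ∧ P'.parts.erase (t \ u) = P.parts := by
  refine ⟨P.extendOfLE hu, ?_⟩
  rcases hu.eq_or_ssubset with rfl | hlt
  · rw [sdiff_self, bot_eq_empty, P.parts_extendOfLE_of_eq rfl]
    exact ⟨mem_insert_self _ _, erase_eq_of_notMem P.empty_notMem_parts⟩
  · rw [P.parts_extendOfLE_of_lt hlt]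
    refine ⟨mem_insert_of_mem (mem_insert_self _ _), erase_insert fun h ↦ ?_⟩
    exact P.ne_empty h (disjoint_sdiff_self_left.eq_bot_of_le (P.le h))

/-- Adds a new point `a` to a partition, in the block `p`; the choice `p = ∅` makes `{a}` a block of
its own. -/
def adjoinPoint (ha : a ∉ t) (P : Finpartition t) (p : {p // p ∈ insert ∅ P.parts}) :
    Finpartition (insert a t) :=
  (P.avoid p).extend (insert_ne_empty a p) (by simp [disjoint_insert_right, ha, sdiff_disjoint])
    (by rw [sup_eq_union, union_insert,
      sdiff_union_of_subset (subset_of_mem_insert_empty_parts p.2)])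

lemma parts_adjoinPoint (ha : a ∉ t) (P : Finpartition t) (p : {p // p ∈ insert ∅ P.parts}) :
    (adjoinPoint ha P p).parts = insert (insert a ↑p) (P.parts.erase p) :=
  congrArg (insert (insert a p.1)) (parts_avoid_eq_erase p.2)

lemma part_adjoinPoint (ha : a ∉ t) (P : Finpartition t) (p : {p // p ∈ insert ∅ P.parts}) :
    (adjoinPoint ha P p).part a = insert a ↑p :=
  Finpartition.part_eq_of_mem _ (by simp [parts_adjoinPoint]) (mem_insert_self _ _)

lemma insert_notMem_parts (ha : a ∉ t) (P : Finpartition t) (p : Finset α) :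
    insert a p ∉ P.parts :=
  fun h ↦ ha (P.le h (mem_insert_self a p))

lemma card_parts_adjoinPoint (ha : a ∉ t) (P : Finpartition t) (p : {p // p ∈ insert ∅ P.parts}) :
    #(adjoinPoint ha P p).parts = if (p : Finset α) = ∅ then #P.parts + 1 else #P.parts := by
  rw [parts_adjoinPoint, card_insert_of_notMem
    fun h ↦ insert_notMem_parts ha P p (mem_of_mem_erase h)]
  split_ifs with hp
  · rw [hp, erase_eq_of_notMem P.empty_notMem_parts]
  · exact card_erase_add_one ((mem_insert.1 p.2).resolve_left hp)

lemma adjoinPoint_injective (ha : a ∉ t) :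
    Function.Injective fun x : (P : Finpartition t) × {p // p ∈ insert ∅ P.parts} ↦
      adjoinPoint ha x.1 x.2 := by
  rintro ⟨P, p, hp⟩ ⟨P', p', hp'⟩ h
  have hap : a ∉ p := fun h ↦ ha (subset_of_mem_insert_empty_parts hp h)
  have hap' : a ∉ p' := fun h ↦ ha (subset_of_mem_insert_empty_parts hp' h)
  obtain rfl : p = p' := by
    have hpart := congrArg (fun Q ↦ Q.part a) h
    simp only [part_adjoinPoint] at hpart
    rw [← erase_insert hap, hpart, erase_insert hap']
  have herase : P.parts.erase p = P'.parts.erase p := by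
    have hparts := congrArg (fun Q ↦ Q.parts.erase (insert a p)) h
    simp only [parts_adjoinPoint] at hparts
    rwa [erase_insert fun h ↦ insert_notMem_parts ha P p (mem_of_mem_erase h),
      erase_insert fun h ↦ insert_notMem_parts ha P' p (mem_of_mem_erase h)] at hparts
  obtain rfl : P = P' := Finpartition.ext <| by
    rw [← erase_empty_insert_erase_parts hp, herase, erase_empty_insert_erase_parts hp']
  rfl

lemma adjoinPoint_surjective (ha : a ∉ t) :
    Function.Surjective fun x : (P : Finpartition t) × {p // p ∈ insert ∅ P.parts} ↦
      adjoinPoint ha x.1 x.2 := by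
  intro Q
  have haQ : a ∈ Q.part a := Q.mem_part_self.2 (mem_insert_self a t)
  have hQ : Q.part a ∈ Q.parts := Q.part_mem.2 (mem_insert_self a t)
  obtain ⟨P, hp, hP⟩ := exists_erase_parts_eq (t := t)
    (u := insert a t \ Q.part a) (by grind) (Q.avoid (Q.part a))
  have hpart : insert a (t \ (insert a t \ Q.part a)) = Q.part a := by
    have := Q.part_subset a
    grind
  refine ⟨⟨P, _, hp⟩, Finpartition.ext ?_⟩
  simp only [parts_adjoinPoint]
  rw [hpart, hP, parts_avoid_eq_erase (mem_insert_of_mem hQ), insert_erase hQ]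

lemma card_filter_card_parts_adjoinPoint (ha : a ∉ t) (P : Finpartition t) (k : ℕ) :
    #{p | #(adjoinPoint ha P p).parts = k + 1} =
      (k + 1) * (if #P.parts = k + 1 then 1 else 0) + (if #P.parts = k then 1 else 0) := by
  simp only [card_parts_adjoinPoint, card_filter]
  rw [sum_coe_sort (insert ∅ P.parts)
      fun p ↦ if (if p = ∅ then #P.parts + 1 else #P.parts) = k + 1 then 1 else 0,
    sum_insert P.empty_notMem_parts,
    sum_congr rfl fun p hp ↦ by rw [if_neg (P.ne_empty hp)], sum_const]
  split_ifs <;> simp_all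

lemma card_filter_card_parts_insert (ha : a ∉ t) (k : ℕ) :
    #{Q : Finpartition (insert a t) | #Q.parts = k + 1} =
      (k + 1) * #{P : Finpartition t | #P.parts = k + 1} +
        #{P : Finpartition t | #P.parts = k} := by
  have hbij : Function.Bijective _ := ⟨adjoinPoint_injective ha, adjoinPoint_surjective ha⟩
  calc #{Q : Finpartition (insert a t) | #Q.parts = k + 1}
      = ∑ P : Finpartition t, #{p | #(adjoinPoint ha P p).parts = k + 1} := by
        simp only [card_filter]
        rw [← hbij.sum_comp, Fintype.sum_sigma]
    _ = _ := by
        simp_rw [card_filter_card_parts_adjoinPoint, sum_add_distrib, ← mul_sum, card_filter]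

lemma card_filter_card_parts_eq_stirlingSecond (s : Finset α) (k : ℕ) :
    #{P : Finpartition s | #P.parts = k} = Nat.stirlingSecond #s k := by
  induction s using Finset.induction_on generalizing k with
  | empty =>
    have : Unique (Finpartition (∅ : Finset α)) := inferInstanceAs (Unique (Finpartition ⊥))
    have hcard (P : Finpartition (∅ : Finset α)) : #P.parts = 0 := by
      rw [card_eq_zero, P.parts_eq_empty_iff, bot_eq_empty]
    cases k <;> simp [hcard]
  | insert a t ha ih =>
    cases k with
    | zero => simp [card_insert_of_notMem ha]
    | succ k =>
      rw [card_filter_card_parts_insert ha, ih, ih, card_insert_of_notMem ha,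
        Nat.stirlingSecond_succ_succ]

lemma stirling2_eq_stirlingSecond (m n : ℕ) : stirling2 m n = Nat.stirlingSecond m n := by
  rw [stirling2, Nat.card_eq_fintype_card, Fintype.card_subtype,
    card_filter_card_parts_eq_stirlingSecond, card_fin]

end StirlingSecond

section LowerSetContents

open Finset

variable {s : Finset (ℕ × ℕ)}

lemma abs_content_lt_card (hs : IsLowerSet (s : Set (ℕ × ℕ))) {c : ℕ × ℕ} (hc : c ∈ s) :
    |content c| < #s := by
  have hIic : (c.1 + 1) * (c.2 + 1) ≤ #s := by
    simpa [Finset.card_Iic_prod] using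
      card_le_card fun b hb ↦ hs (mem_Iic.1 hb : b ≤ c) hc
  have hsum : c.1 + c.2 < #s := by nlinarith
  rw [content, abs_lt]
  omega

lemma contents_eq_cons_erase {c : ℕ × ℕ} (hc : c ∈ s) :
    contents s = content c ::ₘ contents (s.erase c) := by
  rw [contents, contents, erase_val, ← Multiset.map_cons, Multiset.cons_erase hc]

lemma rel_contents_range (hs : IsLowerSet (s : Set (ℕ × ℕ))) :
    Multiset.Rel (fun a b : ℤ ↦ |a| ≤ b) (contents s) ((Multiset.range #s).map (↑)) := by
  induction h : #s generalizing s with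
  | zero => simp [card_eq_zero.1 h, contents]
  | succ n ih =>
    obtain ⟨c, hc⟩ := s.exists_maximal (card_pos.1 (h ▸ n.succ_pos))
    have hlower : IsLowerSet (s.erase c : Set (ℕ × ℕ)) := by
      rw [coe_erase]
      exact hs.erase fun b hb hcb ↦ (hc.eq_of_le hb hcb).symm
    rw [contents_eq_cons_erase hc.prop, Multiset.range_succ, Multiset.map_cons]
    refine Multiset.Rel.cons ?_ (ih hlower (by rw [card_erase_of_mem hc.prop, h]; rfl))
    have := abs_content_lt_card hs hc.prop
    omega

lemma completeHomog_contents_le_stirlingSecond (hs : IsLowerSet (s : Set (ℕ × ℕ))) {n : ℕ}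
    (hn : #s = n + 1) (r : ℕ) :
    completeHomog (contents s) r ≤ Nat.stirlingSecond (n + r) n := by
  calc completeHomog (contents s) r
      ≤ completeHomog ((Multiset.range #s).map (Nat.castRingHom ℤ)) r :=
        (le_abs_self _).trans (abs_completeHomog_le_of_rel (rel_contents_range hs) r)
    _ = Nat.stirlingSecond (n + r) n := by
        rw [← map_completeHomog, hn, completeHomog_range_eq_stirlingSecond, eq_natCast]

lemma hYoung_le_stirlingSecond {lam : YoungDiagram} {n : ℕ} (hlam : lam.card = n + 1) (r : ℕ) :
    hYoung r lam ≤ Nat.stirlingSecond (n + r) n := by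
  rw [hYoung_eq_completeHomog]
  exact_mod_cast completeHomog_contents_le_stirlingSecond lam.isLowerSet hlam r

end LowerSetContents

section RowLens

lemma sum_rowLens (μ : YoungDiagram) : μ.rowLens.sum = μ.card := by
  have hfst : (μ.cells : Set (ℕ × ℕ)).MapsTo Prod.fst (Finset.range (μ.colLen 0)) := by
    rintro ⟨i, j⟩ hij
    exact Finset.mem_coe.2 <| Finset.mem_range.2 <|
      YoungDiagram.mem_iff_lt_colLen.1 (μ.up_left_mem le_rfl (Nat.zero_le j) hij)
  calc μ.rowLens.sum = ∑ i ∈ Finset.range (μ.colLen 0), μ.rowLen i := rfl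
    _ = ∑ i ∈ Finset.range (μ.colLen 0), (μ.row i).card := by simp only [μ.rowLen_eq_card]
    _ = μ.card := (Finset.card_eq_sum_card_fiberwise hfst).symm

variable {d : ℕ}

/-- The partition of `d` into the row lengths of a Young diagram with `d` cells. -/
def rowLensPartition (lam : {lam : YoungDiagram // lam.card = d}) : Nat.Partition d where
  parts := lam.1.rowLens
  parts_pos hi := lam.1.pos_of_mem_rowLens _ hi
  parts_sum := by rw [Multiset.sum_coe, sum_rowLens, lam.2]

lemma rowLensPartition_injective : Function.Injective (rowLensPartition (d := d)) := by
  intro lam mu h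
  have hperm : lam.1.rowLens.Perm mu.1.rowLens := Multiset.coe_eq_coe.1 (congrArg (·.parts) h)
  exact Subtype.ext <| YoungDiagram.equivListRowLens.injective <| Subtype.ext <|
    hperm.eq_of_sortedGE lam.1.rowLens_sorted mu.1.rowLens_sorted

lemma rowLensPartition_surjective : Function.Surjective (rowLensPartition (d := d)) := by
  intro p
  have hsorted : (p.parts.sort (· ≥ ·)).SortedGE := (Multiset.pairwise_sort _ _).sortedGE
  have hrowLens : (YoungDiagram.ofRowLens _ hsorted).rowLens = p.parts.sort (· ≥ ·) :=
    YoungDiagram.rowLens_ofRowLens_eq_self fun i hi ↦ p.parts_pos ((Multiset.mem_sort _).1 hi)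
  refine ⟨⟨YoungDiagram.ofRowLens _ hsorted, ?_⟩, Nat.Partition.ext ?_⟩
  · rw [← sum_rowLens, hrowLens, ← Multiset.sum_coe, Multiset.sort_eq, p.parts_sum]
  · exact (congrArg Multiset.ofList hrowLens).trans (Multiset.sort_eq _ _)

/-- Young diagrams with `d` cells correspond to partitions of `d`. -/
def youngDiagramEquivPartition (d : ℕ) :
    {lam : YoungDiagram // lam.card = d} ≃ Nat.Partition d :=
  Equiv.ofBijective rowLensPartition ⟨rowLensPartition_injective, rowLensPartition_surjective⟩

instance (d : ℕ) : Fintype {lam : YoungDiagram // lam.card = d} :=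
  Fintype.ofEquiv _ (youngDiagramEquivPartition d).symm

instance (d : ℕ) : Nonempty {lam : YoungDiagram // lam.card = d} :=
  (youngDiagramEquivPartition d).nonempty

open scoped BigOperators

lemma Hgd_one (d : ℕ) : Hgd 1 d = d.factorial * Fintype.card (Nat.Partition d) := by
  rw [Hgd, tsum_fintype, ← Fintype.card_congr (youngDiagramEquivPartition d)]
  simp [hYoung]

lemma Hgd_succ_div_Hgd_one (k d : ℕ) :
    Hgd (k + 1) d / Hgd 1 d =
      𝔼 lam : {lam : YoungDiagram // lam.card = d}, hYoung (2 * k) lam.1 := by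
  rw [Hgd_one, ← Fintype.card_congr (youngDiagramEquivPartition d), Hgd, tsum_fintype,
    mul_div_mul_left _ _ (Nat.cast_ne_zero.2 d.factorial_ne_zero),
    Fintype.expect_eq_sum_div_card]
  rfl

end RowLens

section SumSqContents

open Finset

variable {s : Finset (ℕ × ℕ)}

lemma sumSq_contents (s : Finset (ℕ × ℕ)) : sumSq (contents s) = ∑ c ∈ s, content c ^ 2 := by
  rw [sumSq, contents, Multiset.map_map]
  rfl

lemma subset_range_product_range (hs : IsLowerSet (s : Set (ℕ × ℕ))) {i j : ℕ}
    (hi : (i, 0) ∉ s) (hj : (0, j) ∉ s) : s ⊆ range i ×ˢ range j := by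
  intro c hc
  refine mem_product.2 ⟨mem_range.2 (lt_of_not_ge fun h ↦ hi ?_),
    mem_range.2 (lt_of_not_ge fun h ↦ hj ?_)⟩
  · exact hs (show (i, 0) ≤ c from ⟨h, Nat.zero_le _⟩) hc
  · exact hs (show (0, j) ≤ c from ⟨Nat.zero_le _, h⟩) hc

lemma card_le_mul_of_notMem (hs : IsLowerSet (s : Set (ℕ × ℕ))) {i j : ℕ}
    (hi : (i, 0) ∉ s) (hj : (0, j) ∉ s) : #s ≤ i * j := by
  simpa using card_le_card (subset_range_product_range hs hi hj)

lemma card_add_three_mul_card_le (s : Finset (ℕ × ℕ)) :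
    (#s : ℤ) + 3 * #{c ∈ s | |content c| = 2} ≤
      sumSq (contents s) + #{c ∈ s | content c = 0} := by
  have hpointwise (a : ℤ) :
      1 + 3 * (if |a| = 2 then 1 else 0) ≤ a ^ 2 + if a = 0 then 1 else 0 := by
    split_ifs with htwo hzero hzero
    · simp [hzero] at htwo
    · nlinarith [sq_abs a]
    · simp [hzero]
    · nlinarith [sq_abs a, abs_pos.2 hzero]
  calc (#s : ℤ) + 3 * #{c ∈ s | |content c| = 2}
      = ∑ c ∈ s, (1 + 3 * (if |content c| = 2 then 1 else 0)) := by
        rw [sum_add_distrib, ← mul_sum, sum_boole, sum_const, nsmul_one]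
    _ ≤ ∑ c ∈ s, (content c ^ 2 + if content c = 0 then 1 else 0) :=
        sum_le_sum fun c _ ↦ hpointwise (content c)
    _ = sumSq (contents s) + #{c ∈ s | content c = 0} := by
        rw [sum_add_distrib, sum_boole, sumSq_contents]

/-- Away from `(0, 0)` and `(1, 1)`, moving up two rows takes content `0` to content `2`. -/
lemma card_content_eq_zero_le (hs : IsLowerSet (s : Set (ℕ × ℕ))) :
    #{c ∈ s | content c = 0} ≤ #{c ∈ s | |content c| = 2} + 2 := by
  have hsubset : {c ∈ s | content c = 0} ⊆
      insert (0, 0) (insert (1, 1) ({c ∈ s | |content c| = 2}.image fun c ↦ (c.2, c.2))) := by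
    rintro ⟨i, j⟩ hij
    obtain ⟨hmem, hzero⟩ := mem_filter.1 hij
    obtain rfl : j = i := by simpa [content, sub_eq_zero] using hzero
    match j with
    | 0 | 1 => simp
    | i + 2 =>
      refine mem_insert_of_mem (mem_insert_of_mem (mem_image.2 ⟨(i, i + 2), ?_, rfl⟩))
      exact mem_filter.2 ⟨hs (show (i, i + 2) ≤ (i + 2, i + 2) by simp) hmem, by simp [content]⟩
  calc #{c ∈ s | content c = 0}
      ≤ #({c ∈ s | |content c| = 2}.image fun c ↦ (c.2, c.2)) + 1 + 1 :=
        (card_le_card hsubset).trans <|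
          (card_insert_le _ _).trans <| Nat.succ_le_succ (card_insert_le _ _)
    _ ≤ #{c ∈ s | |content c| = 2} + 2 := Nat.add_le_add_right card_image_le 2

lemma card_le_sumSq_contents_add_two (hs : IsLowerSet (s : Set (ℕ × ℕ))) :
    (#s : ℤ) ≤ sumSq (contents s) + 2 := by
  have hcount := card_add_three_mul_card_le s
  have hdiag := card_content_eq_zero_le hs
  omega

lemma card_le_sumSq_contents (hs : IsLowerSet (s : Set (ℕ × ℕ)))
    (hmem : (2, 0) ∈ s ∨ (0, 2) ∈ s) : (#s : ℤ) ≤ sumSq (contents s) := by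
  have htwo : 0 < #{c ∈ s | |content c| = 2} :=
    card_pos.2 <| hmem.elim (fun h ↦ ⟨_, mem_filter.2 ⟨h, rfl⟩⟩) fun h ↦ ⟨_, mem_filter.2 ⟨h, rfl⟩⟩
  have hcount := card_add_three_mul_card_le s
  have hdiag := card_content_eq_zero_le hs
  omega

lemma mem_Icc_of_sumSq_contents_lt_card (hs : IsLowerSet (s : Set (ℕ × ℕ))) (hcard : 3 ≤ #s)
    (hlt : sumSq (contents s) < #s) :
    s ∈ Icc ({(0, 0), (0, 1), (1, 0)} : Finset (ℕ × ℕ)) (range 2 ×ˢ range 2) := by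
  obtain ⟨hcol, hrow⟩ : (2, 0) ∉ s ∧ (0, 2) ∉ s :=
    not_or.1 fun hmem ↦ (card_le_sumSq_contents hs hmem).not_gt hlt
  have h01 : (0, 1) ∈ s := by
    by_contra h
    exact absurd (card_le_mul_of_notMem hs hcol h) (by omega)
  have h10 : (1, 0) ∈ s := by
    by_contra h
    exact absurd (card_le_mul_of_notMem hs h hrow) (by omega)
  have h00 : (0, 0) ∈ s := hs (show (0, 0) ≤ (0, 1) by simp) h01
  exact mem_Icc.2 ⟨by simp [insert_subset_iff, h00, h01, h10],
    subset_range_product_range hs hcol hrow⟩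

lemma eq_of_sumSq_contents_lt_card {t : Finset (ℕ × ℕ)} (hs : IsLowerSet (s : Set (ℕ × ℕ)))
    (ht : IsLowerSet (t : Set (ℕ × ℕ))) (hst : #s = #t) (hcard : 3 ≤ #s)
    (hs_lt : sumSq (contents s) < #s) (ht_lt : sumSq (contents t) < #t) : s = t := by
  have hIcc : ∀ u ∈ Icc ({(0, 0), (0, 1), (1, 0)} : Finset (ℕ × ℕ)) (range 2 ×ˢ range 2),
      ∀ v ∈ Icc ({(0, 0), (0, 1), (1, 0)} : Finset (ℕ × ℕ)) (range 2 ×ˢ range 2),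
      #u = #v → u = v := by decide
  exact hIcc _ (mem_Icc_of_sumSq_contents_lt_card hs hcard hs_lt)
    _ (mem_Icc_of_sumSq_contents_lt_card ht (hst ▸ hcard) ht_lt) hst

end SumSqContents

section Expectation

open Finset
open scoped BigOperators

lemma pow_expect_le_expect_pow {ι : Type*} {s : Finset ι} (hs : s.Nonempty) {f : ι → ℝ}
    (hf : ∀ i ∈ s, 0 ≤ f i) (k : ℕ) : (𝔼 i ∈ s, f i) ^ k ≤ 𝔼 i ∈ s, f i ^ k := by
  have hweights : ∑ _i ∈ s, (#s : ℝ)⁻¹ = 1 := by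
    rw [sum_const, nsmul_eq_mul, mul_inv_cancel₀ (Nat.cast_ne_zero.2 hs.card_ne_zero)]
  simpa only [expect_eq_sum_div_card, div_eq_inv_mul, mul_sum] using
    Real.pow_arith_mean_le_arith_mean_pow s _ f (fun _ _ ↦ by positivity) hweights hf k

/-- The Young diagram consisting of a single row of `d` cells. -/
def rowDiagram (d : ℕ) : YoungDiagram where
  cells := {0} ×ˢ range d
  isLowerSet := by
    rintro ⟨i, j⟩ ⟨i', j'⟩ ⟨hi, hj⟩ hij
    simp only [coe_product, coe_singleton, coe_range, Set.mem_prod, Set.mem_singleton_iff,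
      Set.mem_Iio] at hij ⊢
    exact ⟨Nat.le_zero.1 (hij.1 ▸ hi), hj.trans_lt hij.2⟩

lemma card_rowDiagram (d : ℕ) : (rowDiagram d).card = d := by
  simp [YoungDiagram.card, rowDiagram]

lemma add_two_le_sumSq_contents_rowDiagram {d : ℕ} (hd : 3 ≤ d) :
    (d : ℤ) + 2 ≤ sumSq (contents (rowDiagram d).cells) := by
  have hsum : sumSq (contents (rowDiagram d).cells) = ∑ j ∈ range d, (j : ℤ) ^ 2 := by
    simp [sumSq_contents, rowDiagram, content]
  rw [hsum]
  clear hsum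
  induction d, hd using Nat.le_induction with
  | base => decide
  | succ d hd ih =>
    rw [sum_range_succ]
    push_cast
    nlinarith

lemma subtype_eq_of_sumSq_contents_lt {d : ℕ} (hd : 3 ≤ d)
    {lam mu : {lam : YoungDiagram // lam.card = d}} (hlam : sumSq (contents lam.1.cells) < d)
    (hmu : sumSq (contents mu.1.cells) < d) : lam = mu := by
  obtain ⟨lam, rfl⟩ := lam
  obtain ⟨mu, hcard⟩ := mu
  exact Subtype.ext <| YoungDiagram.ext <|
    eq_of_sumSq_contents_lt_card lam.isLowerSet mu.isLowerSet hcard.symm hd hlam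
      (hmu.trans_eq (congrArg Nat.cast hcard.symm))

/-- At most one diagram has content square sum below `d`, and by at most `2`; the one-row diagram
has a surplus of at least `2`. -/
lemma sum_sumSq_contents_sub_nonneg {d : ℕ} (hd : 3 ≤ d) :
    0 ≤ ∑ lam : {lam : YoungDiagram // lam.card = d},
      (sumSq (contents lam.1.cells) - d : ℤ) := by
  classical
  by_cases! hlt : ∃ lam : {lam : YoungDiagram // lam.card = d}, sumSq (contents lam.1.cells) < d
  · obtain ⟨mu, hmu⟩ := hlt
    have hdeficit : (d : ℤ) ≤ sumSq (contents mu.1.cells) + 2 :=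
      (congrArg Nat.cast mu.2).ge.trans (card_le_sumSq_contents_add_two mu.1.isLowerSet)
    let row : {lam : YoungDiagram // lam.card = d} := ⟨rowDiagram d, card_rowDiagram d⟩
    have hrow : (d : ℤ) + 2 ≤ sumSq (contents row.1.cells) :=
      add_two_le_sumSq_contents_rowDiagram hd
    have hrow_mem : row ∈ univ.erase mu := by
      refine mem_erase.2 ⟨fun h ↦ ?_, mem_univ _⟩
      rw [h] at hrow
      omega
    have hrest : ∀ lam ∈ univ.erase mu, 0 ≤ (sumSq (contents lam.1.cells) - d : ℤ) := by
      intro lam hlam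
      by_contra! hneg
      exact ne_of_mem_erase hlam (subtype_eq_of_sumSq_contents_lt hd (sub_neg.1 hneg) hmu)
    have hsurplus := single_le_sum hrest hrow_mem
    rw [← add_sum_erase _ _ (mem_univ mu)]
    omega
  · exact sum_nonneg fun lam _ ↦ sub_nonneg.2 (hlt lam)

lemma le_expect_sumSq_contents {d : ℕ} (hd : 3 ≤ d) :
    (d : ℝ) ≤
      𝔼 lam : {lam : YoungDiagram // lam.card = d}, ((sumSq (contents lam.1.cells) : ℤ) : ℝ) := by
  rw [Fintype.expect_eq_sum_div_card, le_div_iff₀ (Nat.cast_pos.2 Fintype.card_pos)]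
  have hsum := sum_sumSq_contents_sub_nonneg hd
  rw [sum_sub_distrib, sum_const, card_univ, nsmul_eq_mul, sub_nonneg, mul_comm] at hsum
  exact_mod_cast hsum

lemma sumSq_contents_pow_div_le_hYoung (k : ℕ) (lam : YoungDiagram) :
    (sumSq (contents lam.cells) : ℤ) ^ k / (2 ^ k * k.factorial) ≤ hYoung (2 * k) lam := by
  rw [hYoung_eq_completeHomog, ← eq_intCast (Int.castRingHom ℝ), ← eq_intCast (Int.castRingHom ℝ),
    map_sumSq, map_completeHomog]
  exact sumSq_pow_div_le_completeHomog k _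

lemma hYoung_eq_one_of_card_eq_two {lam : YoungDiagram} (hlam : lam.card = 2) (k : ℕ) :
    hYoung (2 * k) lam = 1 := by
  have hzero : (0, 0) ∈ lam.cells := by
    obtain ⟨c, hc⟩ := card_pos.1 (hlam.symm ▸ two_pos)
    exact lam.isLowerSet (show (0, 0) ≤ c from bot_le) hc
  obtain ⟨c, hc, hcontent⟩ : ∃ c ∈ lam.cells, |content c| = 1 := by
    by_contra! h
    exact absurd hlam (card_le_mul_of_notMem lam.isLowerSet (i := 1) (j := 1)
      (h (1, 0) · rfl) (h (0, 1) · rfl) |>.trans_lt one_lt_two).ne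
  have hc_erase : c ∈ lam.cells.erase (0, 0) :=
    mem_erase.2 ⟨by rintro rfl; simp [content] at hcontent, hc⟩
  have hcells : {c} = lam.cells.erase (0, 0) :=
    eq_of_subset_of_card_le (singleton_subset_iff.2 hc_erase) <| by
      rw [card_erase_of_mem hzero, card_singleton, ← YoungDiagram.card, hlam]
  have hcontents : contents lam.cells = 0 ::ₘ {content c} := by
    rw [contents_eq_cons_erase hzero, ← hcells]
    rfl
  rw [hYoung_eq_completeHomog, hcontents, completeHomog_zero_cons, completeHomog_singleton,
    pow_mul, ← sq_abs, hcontent, one_pow, one_pow, Int.cast_one]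

lemma pow_div_le_expect_hYoung {d : ℕ} (hd : 2 ≤ d) (k : ℕ) :
    (d : ℝ) ^ k / (2 ^ k * k.factorial) ≤
      𝔼 lam : {lam : YoungDiagram // lam.card = d}, hYoung (2 * k) lam.1 := by
  obtain rfl | hd := hd.eq_or_lt
  · rw [expect_congr rfl fun lam _ ↦ hYoung_eq_one_of_card_eq_two lam.2 k,
      expect_const univ_nonempty]
    rw [div_le_one (by positivity)]
    exact_mod_cast le_mul_of_one_le_right (by positivity) k.factorial_pos
  calc (d : ℝ) ^ k / (2 ^ k * k.factorial)
      ≤ (𝔼 lam : {lam : YoungDiagram // lam.card = d},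
          ((sumSq (contents lam.1.cells) : ℤ) : ℝ)) ^ k / (2 ^ k * k.factorial) := by
        gcongr
        exact le_expect_sumSq_contents hd
    _ ≤ (𝔼 lam : {lam : YoungDiagram // lam.card = d},
          ((sumSq (contents lam.1.cells) : ℤ) : ℝ) ^ k) / (2 ^ k * k.factorial) := by
        gcongr
        exact pow_expect_le_expect_pow univ_nonempty
          (fun lam _ ↦ Int.cast_nonneg (sumSq_nonneg _)) k
    _ ≤ 𝔼 lam : {lam : YoungDiagram // lam.card = d}, hYoung (2 * k) lam.1 := by
        rw [expect_div]
        exact expect_le_expect fun lam _ ↦ sumSq_contents_pow_div_le_hYoung k lam.1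

lemma expect_hYoung_le_stirling2 (n r : ℕ) :
    𝔼 lam : {lam : YoungDiagram // lam.card = n + 1}, hYoung r lam.1 ≤ stirling2 (n + r) n := by
  rw [stirling2_eq_stirlingSecond]
  exact Finset.expect_le Finset.univ_nonempty fun lam _ ↦ hYoung_le_stirlingSecond lam.2 r

end Expectation

/-- For `g ≥ 1` and `d ≥ 2`:
`d^(g−1)/(2^(g−1)(g−1)!) ≤ H_g^d / H_1^d ≤ S(d + 2g − 3, d − 1)`,
where `H_1^d = d! · p(d)`. -/
theorem Hgd_ratio_bounds (g d : ℕ) (hg : 1 ≤ g) (hd : 2 ≤ d) :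
    Hgd 1 d = (Nat.factorial d : ℝ) * (Fintype.card (Nat.Partition d) : ℝ) ∧
    (d : ℝ) ^ (g - 1) / (2 ^ (g - 1) * Nat.factorial (g - 1)) ≤ Hgd g d / Hgd 1 d ∧
    Hgd g d / Hgd 1 d ≤ (stirling2 (d + 2 * g - 3) (d - 1) : ℝ) := by
  obtain ⟨k, rfl⟩ := Nat.exists_eq_add_of_le' hg
  obtain ⟨n, rfl⟩ := Nat.exists_eq_add_of_le' (one_le_two.trans hd)
  have hindex : n + 1 + 2 * (k + 1) - 3 = n + 2 * k := by omega
  rw [Hgd_succ_div_Hgd_one, hindex]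
  exact ⟨Hgd_one _, pow_div_le_expect_hYoung hd k, expect_hYoung_le_stirling2 n (2 * k)⟩
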